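/- Let d ≥ 1 be an integer and let C, C̃ : [0,∞) → [0,∞) be measurable functions such that the measures μ and ν on ℝ^d with Lebesgue densities k ↦ C(‖k‖) and k ↦ C̃(‖k‖) both have the same finite total mass σ² > 0. Define F(r) = μ({k : ‖k‖ ≤ r})/σ² and F̃(r) = ν({k : ‖k‖ ≤ r})/σ², and assume that F̃ is continuous and strictly increasing on [0,∞) with F̃(0) = 0 and sup_r F̃(r) = 1, so that F̃ has an inverse F̃^{-1} : [0,1) → [0,∞). Define T : ℝ^d → ℝ^d by T(k) = F̃^{-1}(F(‖k‖)) · k/‖k‖ when k ≠ 0 and F(‖k‖) < 1, and T(k) = 0 otherwise. Then the pushforward of μ under T equals ν. -/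

import Mathlib

open MeasureTheory

/-!
In polar coordinates an isotropic measure is the product of a fixed angular law with the law of the
norm, and `T` acts on the norm only, so the claim reduces to the line. There, any right inverse of
`F̃` on `(0, 1)` is increasing and pushes the uniform law to the one with distribution function
`F̃`. If a law has no atoms, its distribution function `F` is continuous, hence has such a right
inverse `G`, and `F ∘ G = id` shows that `F` pushes the law to the uniform one.
-/

section DistributionFunction

open ProbabilityTheory Set

variable {P Q : Measure ℝ} {G : ℝ → ℝ}

theorem aemeasurable_of_rightInvOn_cdf (hG : RightInvOn G (cdf Q) (Ioo 0 1)) :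
    AEMeasurable G (volume.restrict (Ioo 0 1)) :=
  aemeasurable_restrict_of_monotoneOn measurableSet_Ioo
    (Function.monotoneOn_of_rightInvOn_of_mapsTo ((monotone_cdf Q).monotoneOn univ) hG
      (mapsTo_univ _ _))

theorem map_uniform_of_rightInvOn_cdf [IsProbabilityMeasure Q]
    (hG : RightInvOn G (cdf Q) (Ioo 0 1)) :
    (volume.restrict (Ioo 0 1)).map G = Q := by
  have hGm := aemeasurable_of_rightInvOn_cdf hG
  refine Measure.ext_of_Iic _ _ fun t => ?_
  have lower : Ioo 0 (cdf Q t) ⊆ G ⁻¹' Iic t ∩ Ioo 0 1 := fun u hu => by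
    have hu1 : u ∈ Ioo (0 : ℝ) 1 := ⟨hu.1, hu.2.trans_le (cdf_le_one Q t)⟩
    exact ⟨((monotone_cdf Q).reflect_lt ((hG hu1).trans_lt hu.2)).le, hu1⟩
  have upper : G ⁻¹' Iic t ∩ Ioo 0 1 ⊆ Ioc 0 (cdf Q t) := fun u hu =>
    ⟨hu.2.1, (hG hu.2).symm.trans_le (monotone_cdf Q hu.1)⟩
  rw [Measure.map_apply_of_aemeasurable hGm measurableSet_Iic,
    Measure.restrict_apply' measurableSet_Ioo, ← ofReal_cdf]
  exact le_antisymm ((measure_mono upper).trans_eq (by simp))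
    (Eq.trans_le (by simp) (measure_mono lower))

variable [IsProbabilityMeasure P] [NullSingletonClass P]

theorem continuous_cdf : Continuous (cdf P) := by
  refine continuous_iff_continuousAt.2 fun x => ?_
  have hjump : ENNReal.ofReal (cdf P x - Function.leftLim (cdf P) x) = 0 := by
    rw [← StieltjesFunction.measure_singleton, measure_cdf, measure_singleton]
  rw [(monotone_cdf P).continuousAt_iff_leftLim_eq_rightLim, StieltjesFunction.rightLim_eq]
  exact le_antisymm ((monotone_cdf P).leftLim_le le_rfl)
    (sub_nonpos.1 (ENNReal.ofReal_eq_zero.1 hjump))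

theorem exists_rightInvOn_cdf : ∃ G : ℝ → ℝ, RightInvOn G (cdf P) (Ioo 0 1) := by
  have hsurj : ∀ u ∈ Ioo (0 : ℝ) 1, u ∈ range (cdf P) := fun u hu =>
    mem_range_of_exists_le_of_exists_ge continuous_cdf
      ((tendsto_cdf_atBot P).eventually_le_const hu.1).exists
      ((tendsto_cdf_atTop P).eventually_const_le hu.2).exists
  choose! G hG using hsurj
  exact ⟨G, hG⟩

theorem map_cdf_eq_uniform : P.map (cdf P) = volume.restrict (Ioo 0 1) := by
  obtain ⟨G, hG⟩ := exists_rightInvOn_cdf (P := P)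
  have hmeas : Measurable (cdf P) := (monotone_cdf P).measurable
  calc P.map (cdf P)
      = ((volume.restrict (Ioo 0 1)).map G).map (cdf P) := by
        rw [map_uniform_of_rightInvOn_cdf hG]
    _ = (volume.restrict (Ioo 0 1)).map (cdf P ∘ G) :=
        AEMeasurable.map_map_of_aemeasurable hmeas.aemeasurable (aemeasurable_of_rightInvOn_cdf hG)
    _ = (volume.restrict (Ioo 0 1)).map id :=
        Measure.map_congr (ae_restrict_of_forall_mem measurableSet_Ioo hG)
    _ = volume.restrict (Ioo 0 1) := Measure.map_id

theorem ae_cdf_lt_one : ∀ᵐ x ∂P, cdf P x < 1 := by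
  refine ae_of_ae_map (p := (· < 1)) (monotone_cdf P).measurable.aemeasurable ?_
  rw [map_cdf_eq_uniform]
  exact ae_restrict_of_forall_mem measurableSet_Ioo fun _ hu => hu.2

theorem aemeasurable_comp_cdf (hG : RightInvOn G (cdf Q) (Ioo 0 1)) :
    AEMeasurable (G ∘ cdf P) P := by
  refine AEMeasurable.comp_measurable ?_ (monotone_cdf P).measurable
  rw [map_cdf_eq_uniform]
  exact aemeasurable_of_rightInvOn_cdf hG

theorem map_comp_cdf [IsProbabilityMeasure Q] (hG : RightInvOn G (cdf Q) (Ioo 0 1)) :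
    P.map (G ∘ cdf P) = Q := by
  have hGm : AEMeasurable G (P.map (cdf P)) :=
    map_cdf_eq_uniform (P := P) ▸ aemeasurable_of_rightInvOn_cdf hG
  rw [← hGm.map_map_of_aemeasurable (monotone_cdf P).measurable.aemeasurable,
    map_cdf_eq_uniform, map_uniform_of_rightInvOn_cdf hG]

end DistributionFunction

theorem map_withDensity_comp {α β : Type*} [MeasurableSpace α] [MeasurableSpace β] {μ : Measure α}
    {f : α → β} (hf : Measurable f) {c : β → ENNReal} (hc : Measurable c) :
    (μ.withDensity (c ∘ f)).map f = (μ.map f).withDensity c := by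
  ext s hs
  rw [Measure.map_apply hf hs, withDensity_apply _ (hf hs), withDensity_apply _ hs,
    setLIntegral_map hs hc hf]
  rfl

section NormLaw

open ProbabilityTheory Set Metric

variable {E : Type*} [NormedAddCommGroup E] [MeasurableSpace E] [OpensMeasurableSpace E]
  {μ : Measure E}

theorem ae_map_norm_nonneg : ∀ᵐ r ∂μ.map norm, 0 ≤ r :=
  (ae_map_iff measurable_norm.aemeasurable measurableSet_Ici).2 (ae_of_all _ norm_nonneg)

theorem ae_map_norm_pos (hμ : μ {0} = 0) : ∀ᵐ r ∂μ.map norm, 0 < r := by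
  refine (ae_map_iff measurable_norm.aemeasurable measurableSet_Ioi).2 ?_
  filter_upwards [compl_mem_ae_iff.2 hμ] with k hk using norm_pos_iff.2 hk

theorem nullSingletonClass_map_norm (hμ : ∀ r, μ (sphere 0 r) = 0) :
    NullSingletonClass (μ.map norm) where
  measure_singleton r := by
    rw [Measure.map_apply measurable_norm (measurableSet_singleton r), ← hμ r]
    congr 1
    ext k
    exact mem_sphere_zero_iff_norm.symm

theorem cdf_map_norm_inv_smul {M : ℝ} (hM : 0 ≤ M)
    [IsProbabilityMeasure ((ENNReal.ofReal M)⁻¹ • μ)] (r : ℝ) :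
    cdf (((ENNReal.ofReal M)⁻¹ • μ).map norm) r = (μ {k | ‖k‖ ≤ r}).toReal / M := by
  have := Measure.isProbabilityMeasure_map (μ := (ENNReal.ofReal M)⁻¹ • μ)
    measurable_norm.aemeasurable
  rw [cdf_eq_real, map_measureReal_apply measurable_norm measurableSet_Iic,
    measureReal_ennreal_smul_apply, ENNReal.toReal_inv, ENNReal.toReal_ofReal hM, div_eq_inv_mul]
  rfl

end NormLaw

section Isotropic

open ProbabilityTheory Set Metric

variable {E : Type*} [NormedAddCommGroup E] [NormedSpace ℝ E]

/-- The polar coordinate map `(θ, r) ↦ r θ`; all real `r` are allowed, so that laws of norms can be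
taken as measures on `ℝ`. -/
def polarMap (p : sphere (0 : E) 1 × ℝ) : E := p.2 • (p.1 : E)

theorem norm_polarMap (p : sphere (0 : E) 1 × ℝ) : ‖polarMap p‖ = |p.2| := by
  simp [polarMap, norm_smul]

variable [MeasurableSpace E] {σ : Measure (sphere (0 : E) 1)} {μ ν : Measure E}

/-- `μ` is isotropic with angular law `σ`: in polar coordinates it is the product of `σ` and the
law of the norm under `μ`. -/
def IsIsotropic (σ : Measure (sphere (0 : E) 1)) (μ : Measure E) : Prop :=
  (σ.prod (μ.map norm)).map polarMap = μ

theorem IsIsotropic.smul [SFinite μ] (hμ : IsIsotropic σ μ) (c : ENNReal) :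
    IsIsotropic σ (c • μ) := by
  rw [IsIsotropic, Measure.map_smul, Measure.prod_smul_right, Measure.map_smul, hμ]

theorem norm_polarMap_ae_eq_snd [SFinite σ] {m : Measure ℝ} [SFinite m] (hm : ∀ᵐ r ∂m, 0 ≤ r) :
    norm ∘ polarMap =ᵐ[σ.prod m] Prod.snd := by
  filter_upwards [Measure.quasiMeasurePreserving_snd.ae hm] with p hp
  rw [Function.comp_apply, norm_polarMap, abs_of_nonneg hp]

variable [BorelSpace E]

theorem measurable_polarMap : Measurable (polarMap (E := E)) := by
  have : Continuous (polarMap (E := E)) := by unfold polarMap; fun_prop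
  exact this.measurable

theorem map_norm_map_polarMap [SFinite σ] {m : Measure ℝ} [SFinite m] (hm : ∀ᵐ r ∂m, 0 ≤ r) :
    ((σ.prod m).map polarMap).map norm = σ univ • m := by
  rw [Measure.map_map measurable_norm measurable_polarMap,
    Measure.map_congr (norm_polarMap_ae_eq_snd hm), Measure.map_snd_prod]

theorem isIsotropic_map_polarMap [IsFiniteMeasure σ] [NeZero σ] {m : Measure ℝ} [SFinite m]
    (hm : ∀ᵐ r ∂m, 0 ≤ r) : IsIsotropic ((σ univ)⁻¹ • σ) ((σ.prod m).map polarMap) := by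
  rw [IsIsotropic, map_norm_map_polarMap hm, Measure.prod_smul_left, Measure.prod_smul_right,
    smul_smul, ENNReal.inv_mul_cancel (NeZero.ne _) (measure_ne_top _ _), one_smul]

namespace IsIsotropic

theorem withDensity_norm [SFinite σ] [SFinite μ] (hμ : IsIsotropic σ μ) {c : ℝ → ENNReal}
    (hc : Measurable c) : IsIsotropic σ (μ.withDensity fun k => c ‖k‖) := by
  have hsnd : c ∘ Prod.snd =ᵐ[σ.prod (μ.map norm)] (c ∘ norm) ∘ polarMap :=
    ((norm_polarMap_ae_eq_snd ae_map_norm_nonneg).fun_comp c).symm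
  change (σ.prod ((μ.withDensity (c ∘ norm)).map norm)).map polarMap = μ.withDensity (c ∘ norm)
  calc (σ.prod ((μ.withDensity (c ∘ norm)).map norm)).map polarMap
      = ((σ.prod (μ.map norm)).withDensity (c ∘ Prod.snd)).map polarMap := by
        rw [map_withDensity_comp measurable_norm hc, prod_withDensity_right hc]; rfl
    _ = ((σ.prod (μ.map norm)).map polarMap).withDensity (c ∘ norm) := by
        rw [withDensity_congr_ae hsnd,
          map_withDensity_comp measurable_polarMap (hc.comp measurable_norm)]
    _ = μ.withDensity (c ∘ norm) := by rw [hμ]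

theorem map_radial [SFinite σ] [SFinite μ] (hμ : IsIsotropic σ μ) (hν : IsIsotropic σ ν)
    (hμ0 : μ {0} = 0) {g : ℝ → ℝ} (hg : Measurable g) (hgν : (μ.map norm).map g = ν.map norm) :
    μ.map (fun k => (g ‖k‖ / ‖k‖) • k) = ν := by
  have hT : Measurable fun k : E => (g ‖k‖ / ‖k‖) • k := by fun_prop
  have hcomm : (fun k : E => (g ‖k‖ / ‖k‖) • k) ∘ polarMap
      =ᵐ[σ.prod (μ.map norm)] polarMap ∘ Prod.map id g := by
    filter_upwards [Measure.quasiMeasurePreserving_snd.ae (ae_map_norm_pos hμ0)] with p hp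
    simp only [Function.comp_apply, norm_polarMap, abs_of_pos hp]
    simp only [polarMap, Prod.map_fst, Prod.map_snd, id, smul_smul, div_mul_cancel₀ _ hp.ne']
  calc μ.map (fun k => (g ‖k‖ / ‖k‖) • k)
      = ((σ.prod (μ.map norm)).map polarMap).map (fun k => (g ‖k‖ / ‖k‖) • k) := by rw [hμ]
    _ = ((σ.prod (μ.map norm)).map (Prod.map id g)).map polarMap := by
        rw [Measure.map_map hT measurable_polarMap, Measure.map_congr hcomm,
          Measure.map_map measurable_polarMap (measurable_id.prodMap hg)]
    _ = (σ.prod (ν.map norm)).map polarMap := by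
        rw [← Measure.map_prod_map _ _ measurable_id hg, Measure.map_id, hgν]
    _ = ν := hν

theorem map_monotoneRearrangement [SFinite σ] [IsProbabilityMeasure μ] [IsProbabilityMeasure ν]
    (hμ : IsIsotropic σ μ) (hν : IsIsotropic σ ν) (hμ_sphere : ∀ r, μ (sphere 0 r) = 0)
    {G : ℝ → ℝ} (hG : RightInvOn G (cdf (ν.map norm)) (Ioo 0 1)) {T : E → E}
    (hT : ∀ k ≠ 0, cdf (μ.map norm) ‖k‖ < 1 → T k = (G (cdf (μ.map norm) ‖k‖) / ‖k‖) • k) :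
    μ.map T = ν := by
  have hnorm {κ : Measure E} : AEMeasurable norm κ := measurable_norm.aemeasurable
  have := Measure.isProbabilityMeasure_map (μ := μ) hnorm
  have := Measure.isProbabilityMeasure_map (μ := ν) hnorm
  have hμ0 : μ {0} = 0 := by simpa using hμ_sphere 0
  have := nullSingletonClass_map_norm hμ_sphere
  have hGF := aemeasurable_comp_cdf (P := μ.map norm) hG
  have hg : (μ.map norm).map (hGF.mk _) = ν.map norm := by
    rw [← Measure.map_congr hGF.ae_eq_mk, map_comp_cdf hG]
  rw [← hμ.map_radial hν hμ0 hGF.measurable_mk hg]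
  refine Measure.map_congr ?_
  filter_upwards [compl_mem_ae_iff.2 hμ0, ae_of_ae_map hnorm hGF.ae_eq_mk,
    ae_of_ae_map hnorm ae_cdf_lt_one] with k hk hmk hlt
  rw [hT k hk hlt, ← hmk, Function.comp_apply]

end IsIsotropic

section Haar

variable [FiniteDimensional ℝ E] [Nontrivial E] (vol : Measure E) [vol.IsAddHaarMeasure]

theorem map_polarMap_toSphere_prod :
    (vol.toSphere.prod ((Measure.volumeIoiPow (Module.finrank ℝ E - 1)).map Subtype.val)).map
      polarMap = vol := by
  have hsymm : (vol.toSphere.prod (Measure.volumeIoiPow (Module.finrank ℝ E - 1))).map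
      (homeomorphUnitSphereProd E).symm = vol.comap Subtype.val := by
    rw [← vol.measurePreserving_homeomorphUnitSphereProd.map_eq,
      Measure.map_map (Homeomorph.measurable _) (Homeomorph.measurable _),
      Homeomorph.symm_comp_self, Measure.map_id]
  calc (vol.toSphere.prod ((Measure.volumeIoiPow (Module.finrank ℝ E - 1)).map Subtype.val)).map
        polarMap
      = (vol.toSphere.prod (Measure.volumeIoiPow (Module.finrank ℝ E - 1))).map
          (Subtype.val ∘ (homeomorphUnitSphereProd E).symm) := by
        rw [← Measure.map_id (μ := vol.toSphere),
          Measure.map_prod_map _ _ measurable_id measurable_subtype_coe, Measure.map_id,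
          Measure.map_map measurable_polarMap (measurable_id.prodMap measurable_subtype_coe)]
        rfl
    _ = (vol.comap Subtype.val).map (Subtype.val : ({0}ᶜ : Set E) → E) := by
        rw [← Measure.map_map measurable_subtype_coe (Homeomorph.measurable _), hsymm]
    _ = vol := by
        rw [map_comap_subtype_coe (measurableSet_singleton _).compl, restrict_compl_singleton]

theorem isIsotropic_addHaar : IsIsotropic ((vol.toSphere univ)⁻¹ • vol.toSphere) vol := by
  have hpos : ∀ᵐ r ∂(Measure.volumeIoiPow (Module.finrank ℝ E - 1)).map Subtype.val, 0 ≤ r :=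
    (ae_map_iff measurable_subtype_coe.aemeasurable measurableSet_Ici).2
      (ae_of_all _ fun r => r.2.le)
  have : NeZero vol.toSphere := ⟨vol.toSphere_ne_zero⟩
  simpa only [map_polarMap_toSphere_prod] using isIsotropic_map_polarMap (σ := vol.toSphere) hpos

theorem isIsotropic_addHaar_withDensity_norm {c : ℝ → ENNReal} (hc : Measurable c) :
    IsIsotropic ((vol.toSphere univ)⁻¹ • vol.toSphere) (vol.withDensity fun k => c ‖k‖) :=
  (isIsotropic_addHaar vol).withDensity_norm hc

end Haar

theorem statement3_general [SFinite σ] (hμ : IsIsotropic σ μ) (hν : IsIsotropic σ ν)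
    (hμ_sphere : ∀ r, μ (sphere 0 r) = 0) {M : ℝ} (hM : 0 < M)
    (hμM : μ univ = ENNReal.ofReal M) (hνM : ν univ = ENNReal.ofReal M) {F F' G : ℝ → ℝ}
    (hF : ∀ r, F r = (μ {k | ‖k‖ ≤ r}).toReal / M)
    (hF' : ∀ r, F' r = (ν {k | ‖k‖ ≤ r}).toReal / M) (hG : RightInvOn G F' (Ioo 0 1))
    {T : E → E} (hT : ∀ k ≠ 0, F ‖k‖ < 1 → T k = (G (F ‖k‖) / ‖k‖) • k) : μ.map T = ν := by
  have hcancel : (ENNReal.ofReal M)⁻¹ * ENNReal.ofReal M = 1 :=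
    ENNReal.inv_mul_cancel (ENNReal.ofReal_pos.2 hM).ne' ENNReal.ofReal_ne_top
  have hprob {κ : Measure E} (hκ : κ univ = ENNReal.ofReal M) :
      IsProbabilityMeasure ((ENNReal.ofReal M)⁻¹ • κ) :=
    ⟨by rw [Measure.smul_apply, hκ, smul_eq_mul, hcancel]⟩
  have := hprob hμM
  have := hprob hνM
  have : IsFiniteMeasure μ := ⟨hμM ▸ ENNReal.ofReal_lt_top⟩
  have : IsFiniteMeasure ν := ⟨hνM ▸ ENNReal.ofReal_lt_top⟩
  have hF_cdf : F = cdf (((ENNReal.ofReal M)⁻¹ • μ).map norm) :=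
    funext fun r => (hF r).trans (cdf_map_norm_inv_smul hM.le r).symm
  have hF'_cdf : F' = cdf (((ENNReal.ofReal M)⁻¹ • ν).map norm) :=
    funext fun r => (hF' r).trans (cdf_map_norm_inv_smul hM.le r).symm
  have hmap : ((ENNReal.ofReal M)⁻¹ • μ).map T = (ENNReal.ofReal M)⁻¹ • ν :=
    (hμ.smul _).map_monotoneRearrangement (hν.smul _) (fun r => by simp [hμ_sphere r])
      (hF'_cdf ▸ hG) (hF_cdf ▸ hT)
  rw [Measure.map_smul] at hmap
  simpa only [smul_smul, mul_comm (ENNReal.ofReal M), hcancel, one_smul]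
    using congrArg (ENNReal.ofReal M • ·) hmap

end Isotropic

open Classical in

/-- Monotone radial rearrangement: if `μ` and `ν` are isotropic measures on `ℝ^d` with
radial densities `C(‖k‖)` and `C̃(‖k‖)`, the same finite total mass `σ² > 0`, radial
cumulative distribution functions `F`, `F̃`, with `F̃` continuous, strictly increasing on
`[0,∞)`, `F̃(0) = 0` and supremum `1` (so that it has an inverse `F̃⁻¹ : [0,1) → [0,∞)`),
then the radial map `T(k) = F̃⁻¹(F(‖k‖)) k/‖k‖` (set to `0` when `k = 0` or `F(‖k‖) ≥ 1`)
pushes `μ` forward to `ν`. -/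
theorem statement3 (d : ℕ) (hd : 1 ≤ d) (C Ctil : ℝ → ℝ)
    (hCmeas : Measurable C) (hCtilmeas : Measurable Ctil)
    (hCnonneg : ∀ s, 0 ≤ s → 0 ≤ C s) (hCtilnonneg : ∀ s, 0 ≤ s → 0 ≤ Ctil s)
    (μ ν : Measure (EuclideanSpace ℝ (Fin d)))
    (hμ : μ = volume.withDensity fun k => ENNReal.ofReal (C ‖k‖))
    (hν : ν = volume.withDensity fun k => ENNReal.ofReal (Ctil ‖k‖))
    (σ2 : ℝ) (hσ2 : 0 < σ2)
    (hμmass : μ Set.univ = ENNReal.ofReal σ2)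
    (hνmass : ν Set.univ = ENNReal.ofReal σ2)
    (F Ftil : ℝ → ℝ)
    (hF : ∀ r, F r = (μ {k | ‖k‖ ≤ r}).toReal / σ2)
    (hFtil : ∀ r, Ftil r = (ν {k | ‖k‖ ≤ r}).toReal / σ2)
    (hFtilCont : ContinuousOn Ftil (Set.Ici 0))
    (hFtilMono : StrictMonoOn Ftil (Set.Ici 0))
    (hFtil0 : Ftil 0 = 0)
    (hFtilSup : IsLUB (Ftil '' Set.Ici 0) 1)
    (Finv : ℝ → ℝ)
    (hFinv : ∀ u ∈ Set.Ico (0:ℝ) 1, 0 ≤ Finv u ∧ Ftil (Finv u) = u)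
    (T : EuclideanSpace ℝ (Fin d) → EuclideanSpace ℝ (Fin d))
    (hT : ∀ k, T k = if k ≠ 0 ∧ F ‖k‖ < 1 then (Finv (F ‖k‖) / ‖k‖) • k else 0) :
    Measure.map T μ = ν := by
  have : Nonempty (Fin d) := ⟨⟨0, hd⟩⟩
  subst hμ hν
  exact statement3_general (isIsotropic_addHaar_withDensity_norm volume hCmeas.ennreal_ofReal)
    (isIsotropic_addHaar_withDensity_norm volume hCtilmeas.ennreal_ofReal)
    (fun r => withDensity_absolutelyContinuous _ _ (Measure.addHaar_sphere volume 0 r)) hσ2 hμmass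
    hνmass hF hFtil (fun u hu => (hFinv u ⟨hu.1.le, hu.2⟩).2)
    fun k hk hlt => by rw [hT, if_pos ⟨hk, hlt⟩]
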